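/- Every element b of F_n is represented by an irreducible braid word (one admitting no bigon reduction), and any two irreducible braid words representing b are strongly equivalent. Equivalently, the bigon-reduction rewriting system on braid words modulo strong equivalence is terminating and confluent. -/

import Mathlib

set_option maxHeartbeats 1000000

namespace OneTermBracket

/-- Letters (generators) of free braid words on `n` strands:
`zeta i` is a classical crossing, `tau i` a virtual crossing, `1 ≤ i+1 ≤ n-1`. -/
inductive Letter (n : ℕ) where
  | zeta (i : Fin (n-1))
  | tau  (i : Fin (n-1))
deriving DecidableEq

namespace Letter

def idx {n : ℕ} : Letter n → Fin (n-1)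
  | zeta i => i
  | tau i => i

def isZeta {n : ℕ} : Letter n → Bool
  | zeta _ => true
  | tau _ => false

end Letter

def lo {n : ℕ} (i : Fin (n-1)) : Fin n := ⟨i.1, by have := i.2; omega⟩
def hi {n : ℕ} (i : Fin (n-1)) : Fin n := ⟨i.1 + 1, by have := i.2; omega⟩

/-- The transposition `(i, i+1)` of `{1, …, n}`. -/
def sPerm {n : ℕ} (i : Fin (n-1)) : Equiv.Perm (Fin n) := Equiv.swap (lo i) (hi i)

/-- Each letter acts on positions as the transposition `(i, i+1)`. -/
def transOf {n : ℕ} (g : Letter n) : Equiv.Perm (Fin n) := sPerm g.idx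

/-- The permutation realized by the prefix of length `j` of a braid word,
mapping the top label of a strand to its position at level `j`. -/
def prefPerm {n : ℕ} (w : List (Letter n)) (j : ℕ) : Equiv.Perm (Fin n) :=
  (((w.take j).map transOf).reverse).prod

/-- The permutation `P(β)` of a braid word (top endpoint `k` goes to bottom endpoint `P k`). -/
def permOf {n : ℕ} (w : List (Letter n)) : Equiv.Perm (Fin n) :=
  ((w.map transOf).reverse).prod

/-- The unordered pair of (top labels of the) strands crossing at position `j` of `w`. -/
def strandsAt {n : ℕ} (w : List (Letter n)) (j : ℕ) : Option (Sym2 (Fin n)) :=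
  (w[j]?).map fun g => s((prefPerm w j)⁻¹ (lo g.idx), (prefPerm w j)⁻¹ (hi g.idx))

/-- Component-wise parity determined by a partition `{1,…,n} = N₁ ⊔ N₂` (encoded by
`c : Fin n → Bool`): a classical crossing is odd (`1`) iff its two strands lie in
different parts. Non-classical positions get `0`. -/
def cwParity {n : ℕ} (c : Fin n → Bool) (w : List (Letter n)) (j : ℕ) : ZMod 2 :=
  match w[j]? with
  | some (.zeta i) =>
      if c ((prefPerm w j)⁻¹ (lo i)) = c ((prefPerm w j)⁻¹ (hi i)) then 0 else 1
  | _ => 0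

/-- The defining relations of `F_n` and `FB_n` which do not involve
`ζ_i² = 1` or the classical third Reidemeister move ("strong" moves). -/
inductive RelStrong (n : ℕ) : List (Letter n) → List (Letter n) → Prop
  | tt (i : Fin (n-1)) : RelStrong n [.tau i, .tau i] []
  | virt (i : Fin (n-1)) : RelStrong n [.zeta i, .tau i] [.tau i, .zeta i]
  | far_zz (i j : Fin (n-1)) (h : 2 ≤ Nat.dist i j) :
      RelStrong n [.zeta i, .zeta j] [.zeta j, .zeta i]
  | far_zt (i j : Fin (n-1)) (h : 2 ≤ Nat.dist i j) :
      RelStrong n [.zeta i, .tau j] [.tau j, .zeta i]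
  | far_tt (i j : Fin (n-1)) (h : 2 ≤ Nat.dist i j) :
      RelStrong n [.tau i, .tau j] [.tau j, .tau i]
  | r3v (i j : Fin (n-1)) (h : (j:ℕ) = (i:ℕ) + 1) :
      RelStrong n [.tau i, .tau j, .tau i] [.tau j, .tau i, .tau j]
  | semi (i j : Fin (n-1)) (h : (j:ℕ) = (i:ℕ) + 1) :
      RelStrong n [.tau i, .tau j, .zeta i] [.zeta j, .tau i, .tau j]

/-- The defining relations of `F_n`. -/
inductive RelF (n : ℕ) : List (Letter n) → List (Letter n) → Prop
  | strong {r1 r2} : RelStrong n r1 r2 → RelF n r1 r2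
  | zz (i : Fin (n-1)) : RelF n [.zeta i, .zeta i] []

/-- The defining relations of the free braid group `FB_n`. -/
inductive RelFB (n : ℕ) : List (Letter n) → List (Letter n) → Prop
  | ofF {r1 r2} : RelF n r1 r2 → RelFB n r1 r2
  | r3c (i j : Fin (n-1)) (h : (j:ℕ) = (i:ℕ) + 1) :
      RelFB n [.zeta i, .zeta j, .zeta i] [.zeta j, .zeta i, .zeta j]

/-- One application of a relation from `R` inside a word. -/
def StepOf {n : ℕ} (R : List (Letter n) → List (Letter n) → Prop)
    (w1 w2 : List (Letter n)) : Prop :=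
  ∃ A B r1 r2, R r1 r2 ∧ w1 = A ++ r1 ++ B ∧ w2 = A ++ r2 ++ B

/-- Strong equivalence: all moves of `F_n` except `ζ_i² = 1`. -/
def StrongEq {n : ℕ} (w1 w2 : List (Letter n)) : Prop :=
  Relation.EqvGen (StepOf (RelStrong n)) w1 w2

/-- Equivalence of braid words as elements of `F_n`. -/
def EqF {n : ℕ} (w1 w2 : List (Letter n)) : Prop :=
  Relation.EqvGen (StepOf (RelF n)) w1 w2

/-- Equivalence of braid words as elements of the free braid group `FB_n`. -/
def EqFB {n : ℕ} (w1 w2 : List (Letter n)) : Prop :=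
  Relation.EqvGen (StepOf (RelFB n)) w1 w2

/-- The parity axioms, for a parity `P` defined on the class `C` of braid words.
`P w j` is the parity of the crossing at position `j` of `w` (only classical
positions matter). -/
structure IsParity {n : ℕ} (C : List (Letter n) → Prop)
    (P : List (Letter n) → ℕ → ZMod 2) : Prop where
  /-- Crossings not taking part in a relation keep their parity (part before). -/
  untouched_left : ∀ A B r1 r2, RelFB n r1 r2 →
    C (A ++ r1 ++ B) → C (A ++ r2 ++ B) → ∀ j < A.length,
    P (A ++ r1 ++ B) j = P (A ++ r2 ++ B) j
  /-- Crossings not taking part in a relation keep their parity (part after). -/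
  untouched_right : ∀ A B r1 r2, RelFB n r1 r2 →
    C (A ++ r1 ++ B) → C (A ++ r2 ++ B) → ∀ j < B.length,
    P (A ++ r1 ++ B) (A.length + r1.length + j) = P (A ++ r2 ++ B) (A.length + r2.length + j)
  /-- In commutation-type relations (far commutativity, virtualization), the two
  letters keep their parities. -/
  comm : ∀ A B x y, RelFB n [x, y] [y, x] →
    C (A ++ [x, y] ++ B) → C (A ++ [y, x] ++ B) →
    P (A ++ [x, y] ++ B) A.length = P (A ++ [y, x] ++ B) (A.length + 1) ∧
    P (A ++ [x, y] ++ B) (A.length + 1) = P (A ++ [y, x] ++ B) A.length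
  /-- In a classical second Reidemeister move both crossings have the same parity. -/
  r2c : ∀ A B (i : Fin (n-1)),
    C (A ++ [.zeta i, .zeta i] ++ B) → C (A ++ B) →
    P (A ++ [.zeta i, .zeta i] ++ B) A.length
      = P (A ++ [.zeta i, .zeta i] ++ B) (A.length + 1)
  /-- In a semivirtual move, the classical crossing keeps its parity. -/
  semiv : ∀ A B (i j : Fin (n-1)), (j:ℕ) = (i:ℕ) + 1 →
    C (A ++ [.tau i, .tau j, .zeta i] ++ B) →
    C (A ++ [.zeta j, .tau i, .tau j] ++ B) →
    P (A ++ [.tau i, .tau j, .zeta i] ++ B) (A.length + 2)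
      = P (A ++ [.zeta j, .tau i, .tau j] ++ B) A.length
  /-- In a classical third Reidemeister move the number of odd crossings is even. -/
  r3_even : ∀ A B (i j : Fin (n-1)), (j:ℕ) = (i:ℕ) + 1 →
    C (A ++ [.zeta i, .zeta j, .zeta i] ++ B) →
    C (A ++ [.zeta j, .zeta i, .zeta j] ++ B) →
    P (A ++ [.zeta i, .zeta j, .zeta i] ++ B) A.length
      + P (A ++ [.zeta i, .zeta j, .zeta i] ++ B) (A.length + 1)
      + P (A ++ [.zeta i, .zeta j, .zeta i] ++ B) (A.length + 2) = 0
  /-- In a classical third Reidemeister move, upper/middle/lower crossings on the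
  left correspond to lower/middle/upper crossings on the right with equal parities. -/
  r3_corr : ∀ A B (i j : Fin (n-1)), (j:ℕ) = (i:ℕ) + 1 →
    C (A ++ [.zeta i, .zeta j, .zeta i] ++ B) →
    C (A ++ [.zeta j, .zeta i, .zeta j] ++ B) →
    P (A ++ [.zeta i, .zeta j, .zeta i] ++ B) A.length
      = P (A ++ [.zeta j, .zeta i, .zeta j] ++ B) (A.length + 2) ∧
    P (A ++ [.zeta i, .zeta j, .zeta i] ++ B) (A.length + 1)
      = P (A ++ [.zeta j, .zeta i, .zeta j] ++ B) (A.length + 1) ∧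
    P (A ++ [.zeta i, .zeta j, .zeta i] ++ B) (A.length + 2)
      = P (A ++ [.zeta j, .zeta i, .zeta j] ++ B) A.length

/-- Delete from `w` all classical letters whose parity (given by `par`) is even. -/
def deleteEven {n : ℕ} (w : List (Letter n)) (par : ℕ → ZMod 2) : List (Letter n) :=
  (List.range w.length).filterMap fun j =>
    (w[j]?).bind fun g =>
      match g with
      | .zeta i => if par j = 0 then none else some (.zeta i)
      | .tau i => some (.tau i)

/-- The one-term parity bracket: delete all even classical crossings. -/
def bracket {n : ℕ} (P : List (Letter n) → ℕ → ZMod 2) (w : List (Letter n)) :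
    List (Letter n) :=
  deleteEven w (P w)

/-- Positions of classical crossings of a word. -/
def ZetaPos {n : ℕ} (w : List (Letter n)) : Set ℕ :=
  {j | ∃ i, w[j]? = some (Letter.zeta i)}

/-- The classical crossings at positions `j1 < j2` form a bigon: they lie on the same
pair of strands, and no classical crossing between them lies on either of those strands. -/
def IsBigon {n : ℕ} (w : List (Letter n)) (j1 j2 : ℕ) : Prop :=
  j1 < j2 ∧ j1 ∈ ZetaPos w ∧ j2 ∈ ZetaPos w ∧
  strandsAt w j1 = strandsAt w j2 ∧
  ∀ k, j1 < k → k < j2 → k ∈ ZetaPos w →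
    ∀ e e', strandsAt w j1 = some e → strandsAt w k = some e' → ∀ a ∈ e, a ∉ e'

/-- Delete the letters at two given positions. -/
def delete2 {n : ℕ} (w : List (Letter n)) (j1 j2 : ℕ) : List (Letter n) :=
  (w.eraseIdx (max j1 j2)).eraseIdx (min j1 j2)

/-- One bigon reduction. -/
def BigonStep {n : ℕ} (w w' : List (Letter n)) : Prop :=
  ∃ j1 j2, IsBigon w j1 j2 ∧ w' = delete2 w j1 j2

/-- A word is irreducible if it admits no bigon reduction. -/
def Irreducible {n : ℕ} (w : List (Letter n)) : Prop := ¬ ∃ j1 j2, IsBigon w j1 j2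

/-- Number of classical letters of a word. -/
def countZeta {n : ℕ} (w : List (Letter n)) : ℕ := (w.filter Letter.isZeta).length

/-- `φ` is an isomorphism of the decorated graphs `Γ(w1) ≅ Γ(w2)`, encoded
combinatorially: a bijection of classical crossings preserving the pair of strands
through each crossing, the order of crossings along each strand, and the endpoint
structure (the permutation). -/
structure IsGammaIso {n : ℕ} (w1 w2 : List (Letter n)) (φ : ℕ → ℕ) : Prop where
  maps : ∀ j ∈ ZetaPos w1, φ j ∈ ZetaPos w2
  inj : ∀ j ∈ ZetaPos w1, ∀ j' ∈ ZetaPos w1, φ j = φ j' → j = j'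
  surj : ∀ k ∈ ZetaPos w2, ∃ j ∈ ZetaPos w1, φ j = k
  strands : ∀ j ∈ ZetaPos w1, strandsAt w2 (φ j) = strandsAt w1 j
  order : ∀ j ∈ ZetaPos w1, ∀ j' ∈ ZetaPos w1, j < j' →
    (∃ e e' a, strandsAt w1 j = some e ∧ strandsAt w1 j' = some e' ∧ a ∈ e ∧ a ∈ e') →
    φ j < φ j'
  perm : permOf w1 = permOf w2

/-! ### The groups `F_n` and `FB_n` as presented groups -/

/-- Generators: `Sum.inl i` is the classical generator `ζ_i`,
`Sum.inr i` is the virtual generator `τ_i`. -/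
abbrev GGen (n : ℕ) := Fin (n-1) ⊕ Fin (n-1)

def zg {n : ℕ} (i : Fin (n-1)) : FreeGroup (GGen n) := FreeGroup.of (Sum.inl i)
def tg {n : ℕ} (i : Fin (n-1)) : FreeGroup (GGen n) := FreeGroup.of (Sum.inr i)

/-- The relators of `F_n`. -/
def FRels (n : ℕ) : Set (FreeGroup (GGen n)) :=
  (⋃ i, {zg i * zg i}) ∪ (⋃ i, {tg i * tg i}) ∪
  (⋃ i, {zg i * tg i * (tg i * zg i)⁻¹}) ∪
  (⋃ (i : Fin (n-1)) (j : Fin (n-1)) (_ : 2 ≤ Nat.dist i j),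
    {zg i * zg j * (zg j * zg i)⁻¹, zg i * tg j * (tg j * zg i)⁻¹,
     tg i * tg j * (tg j * tg i)⁻¹}) ∪
  (⋃ (i : Fin (n-1)) (j : Fin (n-1)) (_ : (j:ℕ) = (i:ℕ) + 1),
    {tg i * tg j * tg i * (tg j * tg i * tg j)⁻¹,
     tg i * tg j * zg i * (zg j * tg i * tg j)⁻¹})

/-- The relators of `FB_n`: those of `F_n` together with the classical third
Reidemeister relation. -/
def FBRels (n : ℕ) : Set (FreeGroup (GGen n)) :=
  FRels n ∪
  (⋃ (i : Fin (n-1)) (j : Fin (n-1)) (_ : (j:ℕ) = (i:ℕ) + 1),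
    {zg i * zg j * zg i * (zg j * zg i * zg j)⁻¹})

/-- The group `F_n`. -/
abbrev FGrp (n : ℕ) := PresentedGroup (FRels n)

/-- The free braid group `FB_n`. -/
abbrev FBGrp (n : ℕ) := PresentedGroup (FBRels n)

def zF {n : ℕ} (i : Fin (n-1)) : FGrp n := PresentedGroup.of (Sum.inl i)
def tF {n : ℕ} (i : Fin (n-1)) : FGrp n := PresentedGroup.of (Sum.inr i)

/-- Evaluation of a braid word in `F_n`. -/
def evalF {n : ℕ} (w : List (Letter n)) : FGrp n :=
  (w.map fun g => match g with
    | Letter.zeta i => zF i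
    | Letter.tau i => tF i).prod

/-- For each unordered pair of strands, the mod-2 number of classical letters of `w`
at which these two strands cross (strand labels traced from the top). -/
def crossPar {n : ℕ} : List (Letter n) → Sym2 (Fin n) → ZMod 2
  | [], _ => 0
  | g :: rest, e =>
    (match g with
     | Letter.zeta i => if e = s(lo i, hi i) then (1 : ZMod 2) else 0
     | Letter.tau _ => 0) + crossPar rest (e.map (transOf g))

/-! ### Chord diagrams and the Gaussian parity -/

/-- The setoid on strands given by `SameCycle`; its classes are the orbits of `σ`,
i.e. the components of the closure. -/
def sameCycleSetoid {n : ℕ} (σ : Equiv.Perm (Fin n)) : Setoid (Fin n) :=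
  ⟨σ.SameCycle, ⟨Equiv.Perm.SameCycle.refl σ, Equiv.Perm.SameCycle.symm,
    Equiv.Perm.SameCycle.trans⟩⟩

/-- The rank of a strand in the single cycle of `σ` starting from strand `0`. -/
noncomputable def rankIn {n : ℕ} [NeZero n] (σ : Equiv.Perm (Fin n)) (a : Fin n) : ℕ :=
  ((Function.invFun (fun k : Fin n => (σ ^ (k : ℕ)) 0) a : Fin n) : ℕ)

/-- Coordinates on the core circle of the two endpoints of the chord of the classical
crossing at position `j` (the circle traverses the strands in the cyclic order of `σ`). -/
noncomputable def chordEnds {n : ℕ} [NeZero n] (w : List (Letter n))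
    (σ : Equiv.Perm (Fin n)) (j : ℕ) : ℕ × ℕ :=
  match w[j]? with
  | some (Letter.zeta i) =>
      (rankIn σ ((prefPerm w j)⁻¹ (lo i)) * w.length + j,
       rankIn σ ((prefPerm w j)⁻¹ (hi i)) * w.length + j)
  | _ => (0, 0)

/-- Two chords are linked iff the endpoints of one separate the endpoints of the
other on the core circle. -/
def LinkedChords {n : ℕ} [NeZero n] (w : List (Letter n)) (σ : Equiv.Perm (Fin n))
    (j k : ℕ) : Prop :=
  Xor' (min (chordEnds w σ j).1 (chordEnds w σ j).2 < (chordEnds w σ k).1 ∧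
        (chordEnds w σ k).1 < max (chordEnds w σ j).1 (chordEnds w σ j).2)
       (min (chordEnds w σ j).1 (chordEnds w σ j).2 < (chordEnds w σ k).2 ∧
        (chordEnds w σ k).2 < max (chordEnds w σ j).1 (chordEnds w σ j).2)

/-- The Gaussian parity of the classical crossing at position `j`: the mod-2 number
of chords linked with its chord. Even (`0`) iff linked with evenly many chords. -/
noncomputable def gaussParity {n : ℕ} [NeZero n] (w : List (Letter n))
    (σ : Equiv.Perm (Fin n)) (j : ℕ) : ZMod 2 :=
  (Nat.card {k : ℕ // k < w.length ∧ k ∈ ZetaPos w ∧ k ≠ j ∧ LinkedChords w σ j k} : ZMod 2)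


/-! ### Words in a right-angled Coxeter group / trace monoid -/

inductive WEq {α : Type} (I : α → α → Prop) (b : Prop) : List α → List α → Prop
  | refl (L) : WEq I b L L
  | symm {L M} : WEq I b L M → WEq I b M L
  | trans {L M N} : WEq I b L M → WEq I b M N → WEq I b L N
  | cons (x) {L M} : WEq I b L M → WEq I b (x :: L) (x :: M)
  | swap (x y L) : I x y → WEq I b (x :: y :: L) (y :: x :: L)
  | cancel (x L) : b → WEq I b (x :: x :: L) L

section RACG
variable {α : Type} {I : α → α → Prop} {b : Prop}

theorem WEq.append_left (A : List α) {L M : List α} (h : WEq I b L M) :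
    WEq I b (A ++ L) (A ++ M) := by
  induction A with
  | nil => exact h
  | cons a A ih => exact .cons a ih

theorem WEq.append_right (B : List α) {L M : List α} (h : WEq I b L M) :
    WEq I b (L ++ B) (M ++ B) := by
  induction h with
  | refl L => exact .refl _
  | symm _ ih => exact ih.symm
  | trans _ _ ih1 ih2 => exact ih1.trans ih2
  | cons x _ ih => exact .cons x ih
  | swap x y L h => exact .swap x y _ h
  | cancel x L h => exact .cancel x _ h

open Classical in
noncomputable def ins (I : α → α → Prop) (e : α) : List α → List α
  | [] => [e]
  | x :: L => if x = e then L else if I e x then x :: ins I e L else e :: x :: L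

def NoHead (I : α → α → Prop) (e : α) : List α → Prop
  | [] => True
  | x :: L => x ≠ e ∧ (I e x → NoHead I e L)

def Red (I : α → α → Prop) : List α → Prop
  | [] => True
  | x :: L => NoHead I x L ∧ Red I L

theorem ins_noHead {e : α} {L : List α} (h : NoHead I e L) :
    WEq I False (ins I e L) (e :: L) := by
  induction L with
  | nil => exact .refl _
  | cons x L ih =>
    obtain ⟨h1, h2⟩ := h
    simp only [ins, if_neg h1]
    split_ifs with h3
    · exact (WEq.cons x (ih (h2 h3))).trans (WEq.swap e x L h3).symm
    · exact .refl _

theorem ins_ins {e : α} {L : List α} (h : Red I L) :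
    WEq I False (ins I e (ins I e L)) L := by
  induction L with
  | nil => simp [ins]; exact .refl _
  | cons x L ih =>
    obtain ⟨h1, h2⟩ := h
    by_cases hx : x = e
    · subst hx
      simp only [ins, if_true]
      exact ins_noHead h1
    · simp only [ins, if_neg hx]
      split_ifs with h3
      · simp only [ins, if_neg hx, if_pos h3]
        exact .cons x (ih h2)
      · simp [ins]; exact .refl _

theorem noHead_ins (irr : ∀ x, ¬ I x x) {x e : α} (hI : I x e) {L : List α}
    (h : NoHead I x L) : NoHead I x (ins I e L) := by
  have hne : e ≠ x := by rintro rfl; exact irr _ hI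
  induction L with
  | nil => exact ⟨hne, fun _ => trivial⟩
  | cons y L ih =>
    by_cases hy : y = e
    · subst hy; simp only [ins, if_true]; exact h.2 hI
    · simp only [ins, if_neg hy]
      split_ifs with h3
      · exact ⟨h.1, fun hh => ih (h.2 hh)⟩
      · exact ⟨hne, fun _ => h⟩

theorem red_ins (irr : ∀ x, ¬ I x x) (sym : ∀ x y, I x y → I y x) {e : α} {L : List α}
    (h : Red I L) : Red I (ins I e L) := by
  induction L with
  | nil => exact ⟨trivial, trivial⟩
  | cons y L ih =>
    by_cases hy : y = e
    · subst hy; simp only [ins, if_true]; exact h.2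
    · simp only [ins, if_neg hy]
      split_ifs with h3
      · exact ⟨noHead_ins irr (sym _ _ h3) h.1, ih h.2⟩
      · exact ⟨⟨hy, fun hh => absurd hh h3⟩, h⟩

theorem ins_congr (irr : ∀ x, ¬ I x x) (sym : ∀ x y, I x y → I y x) {e : α} {L M : List α}
    (h : WEq I False L M) : WEq I False (ins I e L) (ins I e M) := by
  induction h with
  | refl L => exact .refl _
  | symm _ ih => exact ih.symm
  | trans _ _ ih1 ih2 => exact ih1.trans ih2
  | cons x h ih =>
    simp only [ins]
    split_ifs
    · exact h
    · exact .cons x ih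
    · exact .cons e (.cons x h)
  | swap x y L h =>
    have hxy : x ≠ y := by rintro rfl; exact irr _ h
    by_cases hx : x = e
    · subst hx
      simp only [ins, if_true, if_neg hxy.symm, if_pos h]
      exact .refl _
    by_cases hy : y = e
    · subst hy
      simp only [ins, if_true, if_neg hxy, if_pos (sym _ _ h)]
      exact .refl _
    simp only [ins, if_neg hx, if_neg hy]
    split_ifs with h1 h2 h2
    · exact .swap x y _ h
    · exact (WEq.swap x e _ (sym _ _ h1)).trans (.cons e (.swap x y _ h))
    · exact (WEq.cons e (.swap x y _ h)).trans (.swap e y _ h2)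
    · exact .cons e (.swap x y _ h)
  | cancel x L h => exact h.elim

theorem ins_comm (irr : ∀ x, ¬ I x x) (sym : ∀ x y, I x y → I y x) {e f : α} (h : I e f)
    (L : List α) : WEq I False (ins I e (ins I f L)) (ins I f (ins I e L)) := by
  have hef : e ≠ f := by rintro rfl; exact irr _ h
  have h' := sym _ _ h
  induction L with
  | nil =>
    simp only [ins, if_neg hef, if_neg hef.symm, if_pos h, if_pos h']
    exact .swap f e _ h'
  | cons x L ih =>
    by_cases hx : x = e
    · subst hx
      simp only [ins, if_true, if_neg hef, if_pos h']
      exact .refl _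
    by_cases hy : x = f
    · subst hy
      simp only [ins, if_true, if_neg hef.symm, if_pos h]
      exact .refl _
    by_cases h1 : I e x <;> by_cases h2 : I f x <;>
      simp only [ins, if_neg hx, if_neg hy, h1, h2, if_true, if_false, if_neg hef,
        if_neg hef.symm, if_pos h, if_pos h']
    · exact .cons x ih
    · exact .refl _
    · exact .refl _
    · exact .swap f e _ h'

noncomputable def nfL (I : α → α → Prop) (L : List α) : List α := L.foldr (ins I) []

theorem red_nfL (irr : ∀ x, ¬ I x x) (sym : ∀ x y, I x y → I y x) (L : List α) :
    Red I (nfL I L) := by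
  induction L with
  | nil => trivial
  | cons x L ih => exact red_ins irr sym ih

theorem nfL_congr (irr : ∀ x, ¬ I x x) (sym : ∀ x y, I x y → I y x) {L M : List α}
    (h : WEq I b L M) : WEq I False (nfL I L) (nfL I M) := by
  induction h with
  | refl L => exact .refl _
  | symm _ ih => exact ih.symm
  | trans _ _ ih1 ih2 => exact ih1.trans ih2
  | cons x h ih => exact ins_congr irr sym ih
  | swap x y L h => exact ins_comm irr sym h _
  | cancel x L h => exact ins_ins (red_nfL irr sym L)

theorem nfL_red (irr : ∀ x, ¬ I x x) (sym : ∀ x y, I x y → I y x) {L : List α}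
    (h : Red I L) : WEq I False (nfL I L) L := by
  induction L with
  | nil => exact .refl _
  | cons x L ih =>
    exact (ins_congr irr sym (ih h.2)).trans (ins_noHead h.1)

theorem red_unique (irr : ∀ x, ¬ I x x) (sym : ∀ x y, I x y → I y x) {L M : List α}
    (h : WEq I b L M) (hL : Red I L) (hM : Red I M) : WEq I False L M :=
  (nfL_red irr sym hL).symm.trans ((nfL_congr irr sym h).trans (nfL_red irr sym hM))

theorem not_noHead {e : α} {L : List α} (h : ¬ NoHead I e L) :
    ∃ A B, L = A ++ e :: B ∧ ∀ x ∈ A, I e x := by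
  induction L with
  | nil => exact absurd trivial h
  | cons x L ih =>
    by_cases hx : x = e
    · subst hx; exact ⟨[], L, rfl, by simp⟩
    · have : I e x ∧ ¬ NoHead I e L := by
        by_contra hh
        exact h ⟨hx, fun h1 => by_contra fun h2 => hh ⟨h1, h2⟩⟩
      obtain ⟨A, B, rfl, hA⟩ := ih this.2
      exact ⟨x :: A, B, rfl, by simpa using ⟨this.1, hA⟩⟩

theorem not_red {L : List α} (h : ¬ Red I L) :
    ∃ A e B C, L = A ++ e :: (B ++ e :: C) ∧ ∀ x ∈ B, I e x := by
  induction L with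
  | nil => exact absurd trivial h
  | cons x L ih =>
    by_cases hx : NoHead I x L
    · obtain ⟨A, e, B, C, rfl, hB⟩ := ih (fun hh => h ⟨hx, hh⟩)
      exact ⟨x :: A, e, B, C, rfl, hB⟩
    · obtain ⟨A, B, rfl, hA⟩ := not_noHead hx
      exact ⟨[], x, A, B, rfl, hA⟩

theorem cancel_far {e : α} (B C : List α) (h : ∀ x ∈ B, I e x) :
    WEq I True (e :: (B ++ e :: C)) (B ++ C) := by
  induction B with
  | nil => exact .cancel _ _ trivial
  | cons x B ih =>
    exact (WEq.swap e x _ (h x (by simp))).trans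
      (.cons x (ih fun y hy => h y (by simp [hy])))

end RACG

/-! ### Permutations -/

section PermPart
variable {n : ℕ}

theorem sPerm_lo (i : Fin (n-1)) : sPerm i (lo i) = hi i := Equiv.swap_apply_left _ _
theorem sPerm_hi (i : Fin (n-1)) : sPerm i (hi i) = lo i := Equiv.swap_apply_right _ _
theorem sPerm_sq (i : Fin (n-1)) : sPerm i * sPerm i = 1 := Equiv.swap_mul_self _ _
theorem sPerm_of_ne (i : Fin (n-1)) (x : Fin n) (h1 : x.1 ≠ i.1) (h2 : x.1 ≠ i.1 + 1) :
    sPerm i x = x :=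
  Equiv.swap_apply_of_ne_of_ne (by intro h; exact h1 (by rw [h]; rfl))
    (by intro h; exact h2 (by rw [h]; rfl))
theorem lo_lt_hi (i : Fin (n-1)) : lo i < hi i := by simp [lo, hi, Fin.lt_def]
theorem lo_succ {i j : Fin (n-1)} (h : (j:ℕ) = (i:ℕ) + 1) : lo j = hi i := by
  simp [lo, hi, Fin.ext_iff, h]
theorem sPerm_lo_lt {i j : Fin (n-1)} (h : (j:ℕ) = (i:ℕ) + 1) : sPerm j (lo i) = lo i :=
  sPerm_of_ne _ _ (by simp [lo]; omega) (by simp [lo]; omega)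
theorem sPerm_hi_gt {i j : Fin (n-1)} (h : (j:ℕ) = (i:ℕ) + 1) : sPerm i (hi j) = hi j :=
  sPerm_of_ne _ _ (by simp [hi]; omega) (by simp [hi]; omega)
theorem sPerm_hi_lt {i j : Fin (n-1)} (h : (j:ℕ) = (i:ℕ) + 1) : sPerm j (hi i) = hi j := by
  rw [← lo_succ h, sPerm_lo]
theorem sPerm_lo_gt {i j : Fin (n-1)} (h : (j:ℕ) = (i:ℕ) + 1) : sPerm i (lo j) = lo i := by
  rw [lo_succ h, sPerm_hi]
theorem dist_iff (i j : Fin (n-1)) :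
    2 ≤ Nat.dist i j ↔ (i:ℕ) + 2 ≤ j ∨ (j:ℕ) + 2 ≤ i := by
  unfold Nat.dist; omega
theorem sPerm_far_lo {i j : Fin (n-1)} (h : 2 ≤ Nat.dist i j) : sPerm i (lo j) = lo j := by
  rw [dist_iff] at h
  exact sPerm_of_ne _ _ (by simp [lo]; omega) (by simp [lo]; omega)
theorem sPerm_far_hi {i j : Fin (n-1)} (h : 2 ≤ Nat.dist i j) : sPerm i (hi j) = hi j := by
  rw [dist_iff] at h
  exact sPerm_of_ne _ _ (by simp [hi]; omega) (by simp [hi]; omega)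
theorem dist_symm {i j : Fin (n-1)} (h : 2 ≤ Nat.dist i j) : 2 ≤ Nat.dist j i := by
  rwa [Nat.dist_comm]

theorem sPerm_far {i j : Fin (n-1)} (h : 2 ≤ Nat.dist i j) :
    sPerm i * sPerm j = sPerm j * sPerm i := by
  have := Equiv.mul_swap_eq_swap_mul (sPerm i) (lo j) (hi j)
  rw [sPerm_far_lo h, sPerm_far_hi h] at this
  exact this

theorem sPerm_braid {i j : Fin (n-1)} (h : (j:ℕ) = (i:ℕ) + 1) :
    sPerm i * sPerm j * sPerm i = sPerm j * sPerm i * sPerm j := by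
  have h1 := Equiv.mul_swap_eq_swap_mul (sPerm i * sPerm j) (lo i) (hi i)
  simp only [Equiv.Perm.mul_apply, sPerm_lo_lt h, sPerm_lo, sPerm_hi_lt h, sPerm_hi_gt h] at h1
  rw [← lo_succ h] at h1
  rw [mul_assoc (sPerm j)]
  have e : Equiv.swap (lo i) (lo j) = sPerm i := by rw [lo_succ h]; rfl
  rw [e] at h1
  exact h1

/-- If there is no descent, the permutation is trivial. -/
theorem eq_one_of_no_descent (σ : Equiv.Perm (Fin n))
    (h : ∀ i : Fin (n-1), ¬ σ (hi i) < σ (lo i)) : σ = 1 := by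
  have hm : StrictMono σ := by
    cases n with
    | zero => intro a; exact a.elim0
    | succ m =>
      rw [Fin.strictMono_iff_lt_succ]
      intro i
      have h1 := h i
      have h2 : σ i.castSucc ≠ σ i.succ := fun hh => by
        have := σ.injective hh
        simp [Fin.ext_iff] at this
      exact lt_of_le_of_ne (not_lt.mp h1) h2
  ext x
  have : (hm.orderIsoOfSurjective _ σ.surjective) = OrderIso.refl (Fin n) :=
    Subsingleton.elim _ _
  have := congrArg (fun f => f x) this
  simpa using congrArg Fin.val this

/-- permutation (position to label) of an index list -/
def PL (l : List (Fin (n-1))) : Equiv.Perm (Fin n) := (l.map sPerm).prod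

@[simp] theorem PL_nil : PL ([] : List (Fin (n-1))) = 1 := rfl
@[simp] theorem PL_append (l m : List (Fin (n-1))) : PL (l ++ m) = PL l * PL m := by
  simp [PL]
@[simp] theorem PL_single (i : Fin (n-1)) : PL [i] = sPerm i := by simp [PL]
@[simp] theorem PL_cons (i : Fin (n-1)) (l) : PL (i :: l) = sPerm i * PL l := by simp [PL]

theorem PL_reverse (l : List (Fin (n-1))) : PL l * PL l.reverse = 1 := by
  induction l with
  | nil => simp
  | cons i l ih =>
    simp only [PL_cons, List.reverse_cons, PL_append, PL_single, PL_nil, mul_one]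
    rw [mul_assoc, ← mul_assoc (PL l), ih, one_mul, sPerm_sq]

theorem PL_surj (σ : Equiv.Perm (Fin n)) : ∃ l, PL l = σ := by
  cases n with
  | zero => exact ⟨[], Subsingleton.elim _ _⟩
  | succ m =>
    have : σ ∈ Submonoid.closure (Set.range fun i : Fin m => Equiv.swap i.castSucc i.succ) := by
      rw [Equiv.Perm.mclosure_swap_castSucc_succ]; trivial
    induction this using Submonoid.closure_induction with
    | mem x hx =>
      obtain ⟨i, rfl⟩ := hx
      exact ⟨[i], by rw [PL_single]; rfl⟩
    | one => exact ⟨[], rfl⟩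
    | mul x y _ _ h1 h2 =>
      obtain ⟨l, rfl⟩ := h1
      obtain ⟨m, rfl⟩ := h2
      exact ⟨l ++ m, PL_append _ _⟩

end PermPart

/-! ### Abstract monoids satisfying the strong relations -/

structure SR {n : ℕ} {M : Type} [Monoid M] (y t : Fin (n-1) → M) : Prop where
  tt : ∀ i, t i * t i = 1
  yt : ∀ i, y i * t i = t i * y i
  far_yt : ∀ i j : Fin (n-1), 2 ≤ Nat.dist i j → y i * t j = t j * y i
  far_tt : ∀ i j : Fin (n-1), 2 ≤ Nat.dist i j → t i * t j = t j * t i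
  far_yy : ∀ i j : Fin (n-1), 2 ≤ Nat.dist i j → y i * y j = y j * y i
  r3 : ∀ i j : Fin (n-1), (j:ℕ) = (i:ℕ) + 1 → t i * t j * t i = t j * t i * t j
  semi : ∀ i j : Fin (n-1), (j:ℕ) = (i:ℕ) + 1 → t i * t j * y i = y j * t i * t j

def TL {n : ℕ} {M : Type} [Monoid M] (t : Fin (n-1) → M) (l : List (Fin (n-1))) : M :=
  (l.map t).prod

section Abs
variable {n : ℕ} {M : Type} [Monoid M] {y t : Fin (n-1) → M}

@[simp] theorem TL_nil : TL t [] = 1 := rfl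
@[simp] theorem TL_append (l m : List (Fin (n-1))) : TL t (l ++ m) = TL t l * TL t m := by
  simp [TL]
@[simp] theorem TL_cons (i : Fin (n-1)) (l) : TL t (i :: l) = t i * TL t l := by simp [TL]

theorem SR.semi' (S : SR y t) (i j : Fin (n-1)) (h : (j:ℕ) = (i:ℕ) + 1) :
    y i * t j * t i = t j * t i * y j := by
  have h1 := S.semi i j h
  calc y i * t j * t i = (t j * (t i * t i) * t j) * (y i * t j * t i) := by
        rw [S.tt, mul_one, S.tt, one_mul]
    _ = t j * t i * (t i * t j * y i) * t j * t i := by simp only [mul_assoc]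
    _ = t j * t i * y j * (t i * (t j * t j) * t i) := by rw [h1]; simp only [mul_assoc]
    _ = _ := by rw [S.tt, mul_one, S.tt, mul_one]

theorem cmp_cases (i j : Fin (n-1)) :
    i = j ∨ 2 ≤ Nat.dist i j ∨ (j:ℕ) = (i:ℕ) + 1 ∨ (i:ℕ) = (j:ℕ) + 1 := by
  rw [dist_iff, Fin.ext_iff]; omega

theorem exchange (S : SR y t) : ∀ (m : ℕ) (l : List (Fin (n-1))), l.length = m →
    ∀ i, PL l (hi i) < PL l (lo i) →
    ∃ l', l'.length < l.length ∧ TL t l = TL t l' * t i ∧ PL l = PL l' * sPerm i := by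
  intro m
  induction m using Nat.strong_induction_on with
  | _ m IH =>
  intro l hl i hd
  rcases List.eq_nil_or_concat' l with rfl | ⟨v, j, rfl⟩
  · simp at hd; exact absurd hd (not_lt.mpr (lo_lt_hi i).le)
  simp only [List.length_append, List.length_singleton] at hl ⊢
  simp only [PL_append, PL_single, Equiv.Perm.mul_apply] at hd
  simp only [TL_append, PL_append, PL_single, TL_cons, TL_nil, mul_one]
  rcases cmp_cases i j with rfl | h | h | h
  · exact ⟨v, by omega, rfl, rfl⟩
  · rw [sPerm_far_hi (dist_symm h), sPerm_far_lo (dist_symm h)] at hd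
    obtain ⟨v', h1, h2, h3⟩ := IH v.length (by omega) v rfl i hd
    refine ⟨v' ++ [j], by simp; omega, ?_, ?_⟩
    · rw [h2]; simp [mul_assoc, S.far_tt i j h]
    · rw [h3]; simp [mul_assoc, sPerm_far h]
  · -- j = i + 1
    rw [sPerm_hi_lt h, sPerm_lo_lt h] at hd
    by_cases hc : PL v (hi i) < PL v (lo i)
    · obtain ⟨v', h1, h2, h3⟩ := IH v.length (by omega) v rfl i hc
      have hd' : PL v' (hi j) < PL v' (lo j) := by
        have e1 : PL v (hi j) = PL v' (hi j) := by rw [h3]; simp [sPerm_hi_gt h]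
        have e2 : PL v (lo i) = PL v' (lo j) := by rw [h3]; simp [sPerm_lo, lo_succ h]
        rwa [e1, e2] at hd
      obtain ⟨v'', k1, k2, k3⟩ := IH v'.length (by omega) v' rfl j hd'
      refine ⟨v'' ++ [i, j], by simp; omega, ?_, ?_⟩
      · rw [h2, k2]
        have := S.r3 i j h
        simp only [mul_assoc] at this
        simp [mul_assoc, this]
      · rw [h3, k3]
        have := sPerm_braid h
        simp only [mul_assoc] at this
        simp [mul_assoc, this]
    · have hc' : PL v (hi j) < PL v (lo j) := by
        rw [lo_succ h]; exact lt_of_lt_of_le hd (not_lt.mp hc)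
      obtain ⟨v', h1, h2, h3⟩ := IH v.length (by omega) v rfl j hc'
      have hd' : PL v' (hi i) < PL v' (lo i) := by
        have e1 : PL v (hi j) = PL v' (hi i) := by rw [h3]; simp [sPerm_hi, lo_succ h]
        have e2 : PL v (lo i) = PL v' (lo i) := by rw [h3]; simp [sPerm_lo_lt h]
        rwa [e1, e2] at hd
      obtain ⟨v'', k1, k2, k3⟩ := IH v'.length (by omega) v' rfl i hd'
      refine ⟨v'', by omega, ?_, ?_⟩
      · rw [h2, mul_assoc, S.tt, mul_one, k2]
      · rw [h3, mul_assoc, sPerm_sq, mul_one, k3]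
  · -- i = j + 1
    rw [sPerm_hi_gt h, sPerm_lo_gt h] at hd
    by_cases hc : PL v (hi i) < PL v (lo i)
    · obtain ⟨v', h1, h2, h3⟩ := IH v.length (by omega) v rfl i hc
      have hd' : PL v' (hi j) < PL v' (lo j) := by
        have e1 : PL v (hi i) = PL v' (hi j) := by rw [h3]; simp [sPerm_hi, lo_succ h]
        have e2 : PL v (lo j) = PL v' (lo j) := by rw [h3]; simp [sPerm_lo_lt h]
        rwa [e1, e2] at hd
      obtain ⟨v'', k1, k2, k3⟩ := IH v'.length (by omega) v' rfl j hd'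
      refine ⟨v'' ++ [i, j], by simp; omega, ?_, ?_⟩
      · rw [h2, k2]
        have := S.r3 j i h
        simp only [mul_assoc] at this
        simp [mul_assoc, this]
      · rw [h3, k3]
        have := sPerm_braid h
        simp only [mul_assoc] at this
        simp [mul_assoc, this]
    · have hc' : PL v (hi j) < PL v (lo j) := by
        rw [← lo_succ h]; exact lt_of_le_of_lt (not_lt.mp hc) hd
      obtain ⟨v', h1, h2, h3⟩ := IH v.length (by omega) v rfl j hc'
      have hd' : PL v' (hi i) < PL v' (lo i) := by
        have e1 : PL v (hi i) = PL v' (hi i) := by rw [h3]; simp [sPerm_hi_gt h]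
        have e2 : PL v (lo j) = PL v' (lo i) := by rw [h3]; simp [sPerm_lo, lo_succ h]
        rwa [e1, e2] at hd
      obtain ⟨v'', k1, k2, k3⟩ := IH v'.length (by omega) v' rfl i hd'
      refine ⟨v'', by omega, ?_, ?_⟩
      · rw [h2, mul_assoc, S.tt, mul_one, k2]
      · rw [h3, mul_assoc, sPerm_sq, mul_one, k3]

theorem TL_eq_one (S : SR y t) : ∀ (m : ℕ) (l : List (Fin (n-1))), l.length = m →
    PL l = 1 → TL t l = 1 := by
  intro m
  induction m using Nat.strong_induction_on with
  | _ m IH =>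
  intro l hl h1
  rcases List.eq_nil_or_concat' l with rfl | ⟨v, i, rfl⟩
  · rfl
  simp only [List.length_append, List.length_singleton] at hl
  simp only [PL_append, PL_single] at h1
  have hv : PL v = sPerm i := by
    have := congrArg (· * sPerm i) h1
    simpa [mul_assoc, sPerm_sq] using this
  obtain ⟨v', k1, k2, k3⟩ := exchange S _ v rfl i (by
    rw [hv, sPerm_hi, sPerm_lo]; exact lo_lt_hi i)
  have : PL v' = 1 := by
    rw [k3, mul_assoc, sPerm_sq, mul_one] at h1; exact h1
  have h := IH v'.length (by omega) v' rfl this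
  simp [k2, mul_assoc, S.tt, h]

theorem TL_rev (S : SR y t) (l : List (Fin (n-1))) : TL t l * TL t l.reverse = 1 := by
  rw [← TL_append]; exact TL_eq_one S _ _ rfl (by rw [PL_append, PL_reverse])

theorem TL_rev' (S : SR y t) (l : List (Fin (n-1))) : TL t l.reverse * TL t l = 1 := by
  simpa using TL_rev S l.reverse

theorem TL_congr (S : SR y t) {l m : List (Fin (n-1))} (h : PL l = PL m) :
    TL t l = TL t m := by
  have : TL t (l ++ m.reverse) = 1 :=
    TL_eq_one S _ _ rfl (by rw [PL_append, h, PL_reverse])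
  calc TL t l = TL t l * (TL t m.reverse * TL t m) := by rw [TL_rev' S, mul_one]
    _ = TL t m := by rw [← mul_assoc, ← TL_append, this, one_mul]

theorem slide (S : SR y t) (j : Fin (n-1)) : ∀ (m : ℕ) (l : List (Fin (n-1))), l.length = m →
    ∀ i, s(PL l (lo i), PL l (hi i)) = s(lo j, hi j) → y j * TL t l = TL t l * y i := by
  intro m
  induction m using Nat.strong_induction_on with
  | _ m IH =>
  intro l hl i hp
  by_cases hdi : PL l (hi i) < PL l (lo i)
  · obtain ⟨v, h1, h2, h3⟩ := exchange S _ l rfl i hdi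
    rw [h3] at hp
    simp only [Equiv.Perm.mul_apply, sPerm_lo, sPerm_hi] at hp
    have := IH v.length (by omega) v rfl i (by rw [Sym2.eq_swap, hp])
    rw [h2, ← mul_assoc, this, mul_assoc, S.yt, ← mul_assoc]
  have hp' : PL l (lo i) = lo j ∧ PL l (hi i) = hi j := by
    rcases Sym2.eq_iff.mp hp with h | h
    · exact h
    · exact absurd (by rw [h.1, h.2]; exact lo_lt_hi j) hdi
  by_cases hno : ∀ k : Fin (n-1), ¬ PL l (hi k) < PL l (lo k)
  · have h1 := eq_one_of_no_descent _ hno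
    have h2 := TL_eq_one S _ l rfl h1
    have : i = j := by
      have := hp'.1
      rw [h1] at this
      simpa [lo, Fin.ext_iff] using this
    rw [h2, this, one_mul, mul_one]
  push Not at hno
  obtain ⟨k, hk⟩ := hno
  obtain ⟨v, h1, h2, h3⟩ := exchange S _ l rfl k hk
  rcases cmp_cases i k with rfl | h | h | h
  · exact absurd hk hdi
  · rw [h3] at hp
    simp only [Equiv.Perm.mul_apply, sPerm_far_hi (dist_symm h), sPerm_far_lo (dist_symm h)] at hp
    have := IH v.length (by omega) v rfl i hp
    rw [h2, ← mul_assoc, this, mul_assoc, S.far_yt i k h, ← mul_assoc]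
  · -- k = i+1
    have e1 : PL v (lo i) = lo j := by rw [← hp'.1, h3]; simp [sPerm_lo_lt h]
    have e2 : PL v (hi k) = hi j := by rw [← hp'.2, h3]; simp [sPerm_hi_lt h]
    have e3 : PL v (hi i) < hi j := by
      rw [lo_succ h, hp'.2, h3] at hk
      simpa [sPerm_hi, lo_succ h] using hk
    have e4 : PL v (hi i) < PL v (lo i) := by
      have : PL v (hi i) ≠ PL v (lo i) := fun hh =>
        (lo_lt_hi i).ne' ((PL v).injective hh)
      rw [e1] at this ⊢
      simp only [lo, hi, Fin.lt_def, ne_eq, Fin.ext_iff] at this e3 ⊢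
      omega
    obtain ⟨u, k1, k2, k3⟩ := exchange S _ v rfl i e4
    have hu : s(PL u (lo k), PL u (hi k)) = s(lo j, hi j) := by
      rw [← e1, ← e2, k3]
      simp [sPerm_lo, sPerm_hi_gt h, lo_succ h]
    have := IH u.length (by omega) u rfl k hu
    have hs := S.semi i k h
    simp only [mul_assoc] at hs
    rw [h2, k2, ← mul_assoc, ← mul_assoc, this]
    simp only [mul_assoc, hs]
  · -- i = k+1
    have e1 : PL v (lo k) = lo j := by rw [← hp'.1, h3]; simp [sPerm_lo_gt h]
    have e2 : PL v (hi i) = hi j := by rw [← hp'.2, h3]; simp [sPerm_hi_gt h]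
    have e3 : lo j < PL v (lo i) := by
      rw [← lo_succ h, hp'.1, h3] at hk
      simpa [sPerm_lo, lo_succ h] using hk
    have e4 : PL v (hi i) < PL v (lo i) := by
      have : PL v (hi i) ≠ PL v (lo i) := fun hh =>
        (lo_lt_hi i).ne' ((PL v).injective hh)
      rw [e2] at this ⊢
      simp only [lo, hi, Fin.lt_def, ne_eq, Fin.ext_iff] at this e3 ⊢
      omega
    obtain ⟨u, k1, k2, k3⟩ := exchange S _ v rfl i e4
    have hu : s(PL u (lo k), PL u (hi k)) = s(lo j, hi j) := by
      rw [← e1, ← e2, k3]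
      simp [sPerm_hi, sPerm_lo_lt h, lo_succ h]
    have := IH u.length (by omega) u rfl k hu
    have hs := S.semi' k i h
    simp only [mul_assoc] at hs
    rw [h2, k2, ← mul_assoc, ← mul_assoc, this]
    simp only [mul_assoc, hs]

open Classical in
/-- The pure generator attached to a pair of strands. -/
noncomputable def cE (y t : Fin (n-1) → M) (e : Sym2 (Fin n)) : M :=
  if h : ∃ p : List (Fin (n-1)) × Fin (n-1), e = s(PL p.1 (lo p.2), PL p.1 (hi p.2)) then
    TL t h.choose.1 * y h.choose.2 * TL t h.choose.1.reverse
  else 1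

theorem cE_eq (S : SR y t) (l : List (Fin (n-1))) (i : Fin (n-1)) {e : Sym2 (Fin n)}
    (he : e = s(PL l (lo i), PL l (hi i))) :
    cE y t e = TL t l * y i * TL t l.reverse := by
  have h : ∃ p : List (Fin (n-1)) × Fin (n-1), e = s(PL p.1 (lo p.2), PL p.1 (hi p.2)) :=
    ⟨(l, i), he⟩
  rw [cE, dif_pos h]
  have hc := h.choose_spec
  generalize h.choose = p at hc
  obtain ⟨m, j⟩ := p
  simp only at hc ⊢
  have hm : PL m.reverse * PL m = 1 := by simpa using PL_reverse m.reverse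
  have key := slide S j _ (m.reverse ++ l) rfl i (by
    have := congrArg (Sym2.map (PL m.reverse)) (he.symm.trans hc)
    simp only [Sym2.map_mk, ← Equiv.Perm.mul_apply, hm] at this
    simpa using this)
  rw [TL_append] at key
  calc TL t m * y j * TL t m.reverse
      = TL t m * y j * TL t m.reverse * (TL t l * TL t l.reverse) := by
        rw [TL_rev S, mul_one]
    _ = TL t m * (y j * (TL t m.reverse * TL t l)) * TL t l.reverse := by simp only [mul_assoc]
    _ = (TL t m * TL t m.reverse) * TL t l * y i * TL t l.reverse := by
        rw [key]; simp only [mul_assoc]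
    _ = _ := by rw [TL_rev S, one_mul]

def Disj (e f : Sym2 (Fin n)) : Prop := ∀ a ∈ e, a ∉ f

theorem Disj.symm {e f : Sym2 (Fin n)} (h : Disj e f) : Disj f e :=
  fun a ha hb => h a hb ha

theorem Disj.irr (e : Sym2 (Fin n)) : ¬ Disj e e := by
  induction e with
  | _ a b => intro h; exact h a (by simp) (by simp)

theorem cE_comm_aux (S : SR y t) (a b c d : Fin n) (hab : a ≠ b) (hac : a ≠ c) (had : a ≠ d)
    (hbc : b ≠ c) (hbd : b ≠ d) (hcd : c ≠ d) :
    cE y t s(a, b) * cE y t s(c, d) = cE y t s(c, d) * cE y t s(a, b) := by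
  have hinj : Function.Injective ![a, b, c, d] := by
    intro i j h
    fin_cases i <;> fin_cases j <;> simp_all
  have hn : 4 ≤ n := by simpa using Fintype.card_le_of_injective _ hinj
  obtain ⟨σ, hσ⟩ : ∃ σ : Equiv.Perm (Fin n), ∀ k : Fin 4, σ (Fin.castLE hn k) = ![a, b, c, d] k := by
    have hr : Function.Injective (Fin.castLE hn) := Fin.castLE_injective hn
    let e := (Equiv.ofInjective _ hr).symm.trans (Equiv.ofInjective _ hinj)
    refine ⟨e.extendSubtype, fun k => ?_⟩
    rw [Equiv.extendSubtype_apply_of_mem _ _ ⟨k, rfl⟩]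
    simp only [e, Equiv.trans_apply]
    have : (Equiv.ofInjective _ hr).symm ⟨Fin.castLE hn k, ⟨k, rfl⟩⟩ = k :=
      Equiv.ofInjective_symm_apply hr k
    rw [this]; rfl
  obtain ⟨l, rfl⟩ := PL_surj σ
  let i0 : Fin (n-1) := ⟨0, by omega⟩
  let i2 : Fin (n-1) := ⟨2, by omega⟩
  have h0 := cE_eq S l i0 (e := s(a, b)) (by
    rw [show a = PL l (lo i0) from (hσ 0).symm, show b = PL l (hi i0) from (hσ 1).symm])
  have h2 := cE_eq S l i2 (e := s(c, d)) (by
    rw [show c = PL l (lo i2) from (hσ 2).symm, show d = PL l (hi i2) from (hσ 3).symm])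
  have hy : y i0 * y i2 = y i2 * y i0 := S.far_yy _ _ (by rw [dist_iff]; simp [i0, i2])
  have key : ∀ u v : M, (TL t l * u * TL t l.reverse) * (TL t l * v * TL t l.reverse)
      = TL t l * (u * v) * TL t l.reverse := by
    intro u v
    calc _ = TL t l * u * (TL t l.reverse * TL t l) * v * TL t l.reverse := by
          simp only [mul_assoc]
      _ = _ := by rw [TL_rev' S, mul_one]; simp only [mul_assoc]
  rw [h0, h2, key, key, hy]

theorem cE_comm (S : SR y t) {e f : Sym2 (Fin n)} (h : Disj e f) :
    cE y t e * cE y t f = cE y t f * cE y t e := by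
  by_cases he : ∃ p : List (Fin (n-1)) × Fin (n-1), e = s(PL p.1 (lo p.2), PL p.1 (hi p.2))
  swap
  · rw [show cE y t e = 1 by rw [cE, dif_neg he]]; simp
  by_cases hf : ∃ p : List (Fin (n-1)) × Fin (n-1), f = s(PL p.1 (lo p.2), PL p.1 (hi p.2))
  swap
  · rw [show cE y t f = 1 by rw [cE, dif_neg hf]]; simp
  obtain ⟨⟨l, i⟩, rfl⟩ := he
  obtain ⟨⟨m, j⟩, rfl⟩ := hf
  have h1 := h (PL l (lo i)) (by simp)
  have h2 := h (PL l (hi i)) (by simp)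
  simp only [Sym2.mem_iff, not_or] at h1 h2
  exact cE_comm_aux S _ _ _ _ (fun hh => (lo_lt_hi i).ne ((PL l).injective hh)) h1.1 h1.2
    h2.1 h2.2 (fun hh => (lo_lt_hi j).ne ((PL m).injective hh))

theorem cE_sq (S : SR y t) (hy : ∀ i, y i * y i = 1) (e : Sym2 (Fin n)) :
    cE y t e * cE y t e = 1 := by
  by_cases he : ∃ p : List (Fin (n-1)) × Fin (n-1), e = s(PL p.1 (lo p.2), PL p.1 (hi p.2))
  swap
  · rw [show cE y t e = 1 by rw [cE, dif_neg he]]; simp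
  obtain ⟨⟨l, i⟩, he⟩ := he
  rw [cE_eq S l i he]
  calc _ = TL t l * y i * (TL t l.reverse * TL t l) * y i * TL t l.reverse := by
          simp only [mul_assoc]
    _ = TL t l * (y i * y i) * TL t l.reverse := by
          rw [TL_rev' S, mul_one]; simp only [mul_assoc]
    _ = _ := by rw [hy, mul_one, TL_rev S]

theorem prod_congr (S : SR y t) {b : Prop} (hy : b → ∀ i, y i * y i = 1)
    {L L' : List (Sym2 (Fin n))} (h : WEq Disj b L L') :
    (L.map (cE y t)).prod = (L'.map (cE y t)).prod := by
  induction h with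
  | refl L => rfl
  | symm _ ih => exact ih.symm
  | trans _ _ ih1 ih2 => exact ih1.trans ih2
  | cons x h ih => simp [ih]
  | swap x y L h => simp only [List.map_cons, List.prod_cons, ← mul_assoc, cE_comm S h]
  | cancel x L h =>
    simp only [List.map_cons, List.prod_cons, ← mul_assoc, cE_sq S (hy h), one_mul]

/-- The sequence of strand pairs of the classical crossings. -/
def code (r : Equiv.Perm (Fin n)) : List (Letter n) → List (Sym2 (Fin n))
  | [] => []
  | .zeta i :: w => s(r (lo i), r (hi i)) :: code (r * sPerm i) w
  | .tau i :: w => code (r * sPerm i) w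

def evL (z t : Fin (n-1) → M) : Letter n → M
  | .zeta i => z i
  | .tau i => t i

theorem main_formula {z : Fin (n-1) → M} (S : SR y t) (hz : ∀ i, z i = y i * t i)
    (w : List (Letter n)) :
    ∀ l, TL t l * (w.map (evL z t)).prod
      = ((code (PL l) w).map (cE y t)).prod * TL t (l ++ w.map Letter.idx) := by
  induction w with
  | nil => intro l; simp [code]
  | cons g w ih =>
    intro l
    have := ih (l ++ [g.idx])
    cases g with
    | tau i =>
      simp only [PL_append, PL_single, TL_append, TL_cons, TL_nil, mul_one, Letter.idx] at this
      simp only [List.map_cons, List.prod_cons, evL, code, TL_append, TL_cons, Letter.idx]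
      rw [← mul_assoc, this]; simp only [mul_assoc]
    | zeta i =>
      simp only [PL_append, PL_single, TL_append, TL_cons, TL_nil, mul_one, Letter.idx] at this
      simp only [List.map_cons, List.prod_cons, evL, code, TL_append, TL_cons, Letter.idx]
      rw [cE_eq S l i rfl, hz]
      calc _ = TL t l * y i * (TL t l.reverse * TL t l) * (t i * (w.map (evL z t)).prod) := by
            rw [TL_rev' S, mul_one]; simp only [mul_assoc]
        _ = TL t l * y i * TL t l.reverse * (TL t l * t i * (w.map (evL z t)).prod) := by
            simp only [mul_assoc]
        _ = _ := by rw [this]; simp only [mul_assoc]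

end Abs

/-! ### Back to braid words -/

section Words
variable {n : ℕ}

theorem code_append (A B : List (Letter n)) : ∀ r : Equiv.Perm (Fin n),
    code r (A ++ B) = code r A ++ code (r * PL (A.map Letter.idx)) B := by
  induction A with
  | nil => intro r; simp [code]
  | cons g A ih =>
    intro r
    cases g <;> simp [code, ih, Letter.idx, mul_assoc]

theorem code_split {L2 : List (Sym2 (Fin n))} {e : Sym2 (Fin n)} (w : List (Letter n)) :
    ∀ (r : Equiv.Perm (Fin n)) (L1 : List (Sym2 (Fin n))), code r w = L1 ++ e :: L2 →
    ∃ A i B, w = A ++ Letter.zeta i :: B ∧ code r A = L1 ∧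
      e = s((r * PL (A.map Letter.idx)) (lo i), (r * PL (A.map Letter.idx)) (hi i)) ∧
      code (r * PL (A.map Letter.idx) * sPerm i) B = L2 := by
  induction w with
  | nil => intro r L1 h; simp [code] at h
  | cons g w ih =>
    intro r L1 h
    cases g with
    | tau i =>
      obtain ⟨A, k, B, rfl, h1, h2, h3⟩ := ih (r * sPerm i) L1 h
      exact ⟨.tau i :: A, k, B, rfl, h1, by simpa [Letter.idx, mul_assoc] using h2,
        by simpa [Letter.idx, mul_assoc] using h3⟩
    | zeta i =>
      cases L1 with
      | nil =>
        simp only [code, List.nil_append, List.cons.injEq] at h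
        exact ⟨[], i, w, rfl, rfl, by simpa using h.1.symm, by simpa using h.2⟩
      | cons x L1 =>
        simp only [code, List.cons_append, List.cons.injEq] at h
        obtain ⟨A, k, B, rfl, h1, h2, h3⟩ := ih (r * sPerm i) L1 h.2
        exact ⟨.zeta i :: A, k, B, rfl, by simp [code, h1, h.1],
          by simpa [Letter.idx, mul_assoc] using h2,
          by simpa [Letter.idx, mul_assoc] using h3⟩

theorem inv_prod (w : List (Letter n)) :
    (((w.map transOf).reverse).prod)⁻¹ = PL (w.map Letter.idx) := by
  induction w with
  | nil => simp
  | cons g w ih =>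
    simp only [List.map_cons, List.reverse_cons, List.prod_append, mul_inv_rev, ih, PL_cons]
    simp [transOf, sPerm]

theorem strandsAt_append (A : List (Letter n)) (g : Letter n) (B : List (Letter n)) :
    strandsAt (A ++ g :: B) A.length =
      some s(PL (A.map Letter.idx) (lo g.idx), PL (A.map Letter.idx) (hi g.idx)) := by
  have : (prefPerm (A ++ g :: B) A.length)⁻¹ = PL (A.map Letter.idx) := by
    rw [← inv_prod, prefPerm]; simp
  simp [strandsAt, this]

theorem zetaPos_append (A : List (Letter n)) (g : Letter n) (B : List (Letter n)) :
    A.length ∈ ZetaPos (A ++ g :: B) ↔ ∃ i, g = .zeta i := by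
  simp [ZetaPos]

theorem split_at {w : List (Letter n)} {k : ℕ} (h : k < w.length) :
    ∃ A g B, w = A ++ g :: B ∧ A.length = k := by
  refine ⟨w.take k, w[k], w.drop (k+1), by simp, by simp; omega⟩

theorem bigon_iff (A B C : List (Letter n)) (i j : Fin (n-1)) :
    IsBigon (A ++ .zeta i :: (B ++ .zeta j :: C)) A.length (A.length + 1 + B.length) ↔
    (let r := PL (A.map Letter.idx)
     s(r (lo i), r (hi i)) =
      s((r * sPerm i * PL (B.map Letter.idx)) (lo j), (r * sPerm i * PL (B.map Letter.idx)) (hi j))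
     ∧ ∀ x ∈ code (r * sPerm i) B, Disj s(r (lo i), r (hi i)) x) := by
  set w := A ++ Letter.zeta i :: (B ++ .zeta j :: C) with hw
  have h1 : A.length ∈ ZetaPos w := (zetaPos_append _ _ _).2 ⟨i, rfl⟩
  have s1 := strandsAt_append A (.zeta i) (B ++ .zeta j :: C)
  rw [← hw] at s1
  have hw2 : w = (A ++ .zeta i :: B) ++ .zeta j :: C := by simp [hw]
  have hl2 : (A ++ Letter.zeta i :: B).length = A.length + 1 + B.length := by simp; omega
  have h2 : A.length + 1 + B.length ∈ ZetaPos w := by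
    rw [← hl2, hw2]; exact (zetaPos_append _ _ _).2 ⟨j, rfl⟩
  have s2 := strandsAt_append (A ++ .zeta i :: B) (.zeta j) C
  rw [← hw2, hl2] at s2
  simp only [List.map_append, List.map_cons, PL_append, PL_cons, Letter.idx, ← mul_assoc] at s1 s2
  simp only [IsBigon, h1, h2, true_and, s1, s2, Option.some.injEq]
  have h0 : A.length < A.length + 1 + B.length := by omega
  simp only [h0, true_and]
  refine and_congr_right fun _ => ?_
  constructor
  · intro H x hx
    obtain ⟨L1, L2, hL⟩ := List.append_of_mem hx
    obtain ⟨B1, k, B2, rfl, -, hx, -⟩ := code_split B _ _ hL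
    have hw3 : w = (A ++ .zeta i :: B1) ++ .zeta k :: (B2 ++ .zeta j :: C) := by simp [hw]
    have s3 := strandsAt_append (A ++ .zeta i :: B1) (.zeta k) (B2 ++ .zeta j :: C)
    have z3 := (zetaPos_append (A ++ .zeta i :: B1) (.zeta k) (B2 ++ .zeta j :: C)).2 ⟨k, rfl⟩
    rw [← hw3] at s3 z3
    simp only [List.map_append, List.map_cons, PL_append, PL_cons, Letter.idx, ← mul_assoc] at s3
    rw [← hx] at s3
    exact H _ (by simp) (by simp; omega) z3 _ _ rfl s3
  · intro H k hk1 hk2 hk3 e e' he he'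
    obtain ⟨k, rfl⟩ : ∃ k', k = A.length + 1 + k' := ⟨k - A.length - 1, by omega⟩
    obtain ⟨B1, g, B2, rfl, rfl⟩ := split_at (show k < B.length by omega)
    have hw3 : w = (A ++ .zeta i :: B1) ++ g :: (B2 ++ .zeta j :: C) := by simp [hw]
    have hl3 : (A ++ Letter.zeta i :: B1).length = A.length + 1 + B1.length := by simp; omega
    rw [← hl3, hw3] at hk3 he'
    obtain ⟨m, rfl⟩ := (zetaPos_append _ _ _).1 hk3
    rw [strandsAt_append] at he'
    simp only [List.map_append, List.map_cons, PL_append, PL_cons, Letter.idx, ← mul_assoc,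
      Option.some.injEq] at he'
    subst he he'
    apply H
    rw [code_append]
    simp [code]

theorem red_of_irreducible {w : List (Letter n)} (h : Irreducible w) :
    Red Disj (code 1 w) := by
  by_contra hr
  obtain ⟨L1, e, L2, L3, hL, hd⟩ := not_red hr
  obtain ⟨A, i, w', rfl, h1, h2, h3⟩ := code_split w _ _ hL
  obtain ⟨B, j, C, rfl, k1, k2, k3⟩ := code_split w' _ _ h3
  refine h ⟨_, _, (bigon_iff A B C i j).2 ?_⟩
  simp only [one_mul] at h2 k1 k2 k3
  refine ⟨h2.symm.trans k2, ?_⟩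
  rw [k1, ← h2]; exact hd

theorem bigon_split {w : List (Letter n)} (h : ¬ Irreducible w) :
    ∃ A i B j C, w = A ++ .zeta i :: (B ++ .zeta j :: C) ∧
      IsBigon (A ++ .zeta i :: (B ++ .zeta j :: C)) A.length (A.length + 1 + B.length) := by
  simp only [Irreducible, not_not] at h
  obtain ⟨j1, j2, hb⟩ := h
  obtain ⟨h0, ⟨i, h1⟩, ⟨j, h2⟩, -⟩ := id hb
  obtain ⟨A, g, w', rfl, rfl⟩ := split_at (List.getElem?_eq_some_iff.1 h1).1
  obtain ⟨k, rfl⟩ : ∃ k', j2 = A.length + 1 + k' := ⟨j2 - A.length - 1, by omega⟩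
  have hk := (List.getElem?_eq_some_iff.1 h2).1
  simp only [List.length_append, List.length_cons] at hk
  obtain ⟨B, g', C, rfl, rfl⟩ := split_at (show k < w'.length by omega)
  have e1 : g = .zeta i := by simpa using h1
  have e2 : g' = .zeta j := by
    have : (A ++ g :: (B ++ g' :: C)) = (A ++ g :: B) ++ g' :: C := by simp
    rw [this, show A.length + 1 + B.length = (A ++ g :: B).length by simp; omega] at h2
    simpa using h2
  subst e1 e2
  exact ⟨A, i, B, j, C, rfl, hb⟩

theorem disj_far {i j : Fin (n-1)} (h : 2 ≤ Nat.dist i j) (r : Equiv.Perm (Fin n)) :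
    Disj s(r (lo i), r (hi i)) s(r (lo j), r (hi j)) := by
  rw [dist_iff] at h
  intro a ha hb
  simp only [Sym2.mem_iff] at ha hb
  rcases ha with rfl | rfl <;> rcases hb with hb | hb <;>
    · have := r.injective hb
      simp [lo, hi, Fin.ext_iff] at this
      omega

theorem relF_inv {r1 r2 : List (Letter n)} (h : RelF n r1 r2) (r : Equiv.Perm (Fin n)) :
    WEq Disj True (code r r1) (code r r2) ∧
      PL (r1.map Letter.idx) = PL (r2.map Letter.idx) := by
  cases h with
  | zz i =>
    refine ⟨?_, by simp [Letter.idx, sPerm_sq]⟩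
    simp only [code, Equiv.Perm.mul_apply, sPerm_lo, sPerm_hi]
    rw [Sym2.eq_swap (a := r (hi i))]
    exact .cancel _ _ trivial
  | strong h =>
    cases h with
    | tt i => exact ⟨.refl _, by simp [Letter.idx, sPerm_sq]⟩
    | virt i =>
      refine ⟨?_, by simp [Letter.idx]⟩
      simp only [code, Equiv.Perm.mul_apply, sPerm_lo, sPerm_hi]
      rw [Sym2.eq_swap]; exact .refl _
    | far_zz i j h =>
      refine ⟨?_, by simp [Letter.idx, sPerm_far h]⟩
      have h' := dist_symm h
      simp only [code, Equiv.Perm.mul_apply, sPerm_far_lo h, sPerm_far_hi h,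
        sPerm_far_lo h', sPerm_far_hi h']
      exact .swap _ _ _ (disj_far h r)
    | far_zt i j h =>
      refine ⟨?_, by simp [Letter.idx, sPerm_far h]⟩
      have h' := dist_symm h
      simp only [code, Equiv.Perm.mul_apply, sPerm_far_lo h', sPerm_far_hi h']
      exact .refl _
    | far_tt i j h => exact ⟨.refl _, by simp [Letter.idx, sPerm_far h]⟩
    | r3v i j h =>
      have := sPerm_braid h
      rw [mul_assoc, mul_assoc] at this
      exact ⟨.refl _, by simp [Letter.idx, this]⟩
    | semi i j h =>
      have := sPerm_braid h
      rw [mul_assoc, mul_assoc] at this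
      refine ⟨?_, by simp [Letter.idx, this]⟩
      simp only [code, Equiv.Perm.mul_apply, sPerm_lo_lt h, sPerm_lo, sPerm_hi_lt h,
        sPerm_hi_gt h, lo_succ h]
      exact .refl _

theorem eqF_inv {w1 w2 : List (Letter n)} (h : EqF w1 w2) :
    WEq Disj True (code 1 w1) (code 1 w2) ∧
      PL (w1.map Letter.idx) = PL (w2.map Letter.idx) := by
  induction h with
  | rel w1 w2 h =>
    obtain ⟨A, B, r1, r2, hr, rfl, rfl⟩ := h
    obtain ⟨h1, h2⟩ := relF_inv hr (1 * PL (A.map Letter.idx))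
    refine ⟨?_, by simp [h2]⟩
    simp only [code_append, List.map_append, PL_append, h2]
    exact (h1.append_left _).append_right _
  | refl w => exact ⟨.refl _, rfl⟩
  | symm _ _ _ ih => exact ⟨ih.1.symm, ih.2.symm⟩
  | trans _ _ _ _ _ ih1 ih2 => exact ⟨ih1.1.trans ih2.1, ih1.2.trans ih2.2⟩

theorem eqv_append_left (R : List (Letter n) → List (Letter n) → Prop) (A : List (Letter n))
    {w1 w2 : List (Letter n)} (h : Relation.EqvGen (StepOf R) w1 w2) :
    Relation.EqvGen (StepOf R) (A ++ w1) (A ++ w2) := by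
  induction h with
  | rel w1 w2 h =>
    obtain ⟨C, B, r1, r2, hr, rfl, rfl⟩ := h
    exact .rel _ _ ⟨A ++ C, B, r1, r2, hr, by simp, by simp⟩
  | refl w => exact .refl _
  | symm _ _ _ ih => exact .symm _ _ ih
  | trans _ _ _ _ _ ih1 ih2 => exact .trans _ _ _ ih1 ih2

theorem eqv_append_right (R : List (Letter n) → List (Letter n) → Prop) (A : List (Letter n))
    {w1 w2 : List (Letter n)} (h : Relation.EqvGen (StepOf R) w1 w2) :
    Relation.EqvGen (StepOf R) (w1 ++ A) (w2 ++ A) := by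
  induction h with
  | rel w1 w2 h =>
    obtain ⟨C, B, r1, r2, hr, rfl, rfl⟩ := h
    exact .rel _ _ ⟨C, B ++ A, r1, r2, hr, by simp, by simp⟩
  | refl w => exact .refl _
  | symm _ _ _ ih => exact .symm _ _ ih
  | trans _ _ _ _ _ ih1 ih2 => exact .trans _ _ _ ih1 ih2

/-- The congruence on the free monoid generated by the relations `R`. -/
def conOf (R : List (Letter n) → List (Letter n) → Prop) : Con (FreeMonoid (Letter n)) where
  r a b := Relation.EqvGen (StepOf R) a.toList b.toList
  iseqv := ⟨fun _ => .refl _, fun h => .symm _ _ h, fun h1 h2 => .trans _ _ _ h1 h2⟩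
  mul' h1 h2 := by
    simp only [FreeMonoid.toList_mul]
    exact .trans _ _ _ (eqv_append_right R _ h1) (eqv_append_left R _ h2)

abbrev QM (R : List (Letter n) → List (Letter n) → Prop) := (conOf R).Quotient

def qg (R : List (Letter n) → List (Letter n) → Prop) (g : Letter n) : QM R :=
  ((FreeMonoid.of g : FreeMonoid (Letter n)) : QM R)

theorem q_prod (R : List (Letter n) → List (Letter n) → Prop) (w : List (Letter n)) :
    (w.map (qg R)).prod = ((FreeMonoid.ofList w : FreeMonoid (Letter n)) : QM R) := by
  induction w with
  | nil => rfl
  | cons g w ih =>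
    rw [List.map_cons, List.prod_cons, ih, FreeMonoid.ofList_cons]; rfl

theorem q_eq_iff (R : List (Letter n) → List (Letter n) → Prop) (w1 w2 : List (Letter n)) :
    (w1.map (qg R)).prod = (w2.map (qg R)).prod ↔ Relation.EqvGen (StepOf R) w1 w2 := by
  rw [q_prod, q_prod, Con.eq]; rfl

theorem q_rel {R : List (Letter n) → List (Letter n) → Prop} {w1 w2 : List (Letter n)}
    (h : R w1 w2) : (w1.map (qg R)).prod = (w2.map (qg R)).prod :=
  (q_eq_iff R _ _).2 (.rel _ _ ⟨[], [], w1, w2, h, by simp, by simp⟩)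

theorem SR.pure {M : Type} [Monoid M] {z t : Fin (n-1) → M} (S : SR z t) :
    SR (fun i => z i * t i) t where
  tt := S.tt
  yt i := by rw [S.yt i, mul_assoc, S.yt i]
  far_yt i j h := by
    rw [mul_assoc, S.far_tt i j h, ← mul_assoc, S.far_yt i j h, mul_assoc]
  far_tt := S.far_tt
  far_yy i j h := by
    have h' := dist_symm h
    calc z i * t i * (z j * t j) = z i * (t i * z j) * t j := by simp only [mul_assoc]
      _ = (z i * z j) * (t i * t j) := by rw [← S.far_yt j i h']; simp only [mul_assoc]
      _ = z j * (z i * t j) * t i := by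
        rw [S.far_yy i j h, S.far_tt i j h]; simp only [mul_assoc]
      _ = _ := by rw [S.far_yt i j h]; simp only [mul_assoc]
  r3 := S.r3
  semi i j h := by
    rw [← mul_assoc, S.semi i j h, mul_assoc, mul_assoc, ← mul_assoc (t i), S.r3 i j h]
    simp only [mul_assoc]

theorem q_SR {R : List (Letter n) → List (Letter n) → Prop}
    (hR : ∀ r1 r2, RelStrong n r1 r2 → R r1 r2) :
    SR (fun i => qg R (.zeta i)) (fun i => qg R (.tau i)) where
  tt i := by simpa using q_rel (hR _ _ (.tt i))
  yt i := by simpa using q_rel (hR _ _ (.virt i))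
  far_yt i j h := by simpa using q_rel (hR _ _ (.far_zt i j h))
  far_tt i j h := by simpa using q_rel (hR _ _ (.far_tt i j h))
  far_yy i j h := by simpa using q_rel (hR _ _ (.far_zz i j h))
  r3 i j h := by simpa [mul_assoc] using q_rel (hR _ _ (.r3v i j h))
  semi i j h := by simpa [mul_assoc] using q_rel (hR _ _ (.semi i j h))

theorem eqv_of_code {R : List (Letter n) → List (Letter n) → Prop}
    (hR : ∀ r1 r2, RelStrong n r1 r2 → R r1 r2) {b : Prop}
    (hb : b → ∀ i, R [.zeta i, .zeta i] []) {w1 w2 : List (Letter n)}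
    (hc : WEq Disj b (code 1 w1) (code 1 w2))
    (hp : PL (w1.map Letter.idx) = PL (w2.map Letter.idx)) :
    Relation.EqvGen (StepOf R) w1 w2 := by
  have S0 := q_SR hR
  have S := S0.pure
  have hz : ∀ i, (fun i => qg R (.zeta i)) i =
      (fun i => qg R (.zeta i) * qg R (.tau i)) i * (fun i => qg R (.tau i)) i := by
    intro i
    rw [mul_assoc, S0.tt, mul_one]
  have f1 := main_formula S hz w1 []
  have f2 := main_formula S hz w2 []
  have hev : evL (fun i => qg R (.zeta i)) (fun i => qg R (.tau i)) = qg R := by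
    funext g; cases g <;> rfl
  simp only [PL_nil, TL_nil, one_mul, List.nil_append, hev] at f1 f2
  rw [← q_eq_iff, f1, f2, TL_congr S hp]
  congr 1
  refine prod_congr S (fun hbb i => ?_) hc
  have h1 : qg R (.zeta i) * qg R (.zeta i) = 1 := by simpa using q_rel (hb hbb i)
  have h2 := S0.yt i
  have h3 := S0.tt i
  calc _ = qg R (.zeta i) * (qg R (.tau i) * qg R (.zeta i)) * qg R (.tau i) := by
        simp only [mul_assoc]
    _ = (qg R (.zeta i) * qg R (.zeta i)) * (qg R (.tau i) * qg R (.tau i)) := by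
        rw [← h2]; simp only [mul_assoc]
    _ = 1 := by rw [h1, h3, mul_one]

theorem exists_irr : ∀ (m : ℕ) (w : List (Letter n)), (code 1 w).length = m →
    ∃ w0, EqF w w0 ∧ Irreducible w0 := by
  intro m
  induction m using Nat.strong_induction_on with
  | _ m IH =>
  intro w hw
  by_cases h : Irreducible w
  · exact ⟨w, .refl _, h⟩
  obtain ⟨A, i, B, j, C, rfl, hb⟩ := bigon_split h
  rw [bigon_iff] at hb
  obtain ⟨h1, h2⟩ := hb
  have hc : WEq Disj True (code 1 (A ++ .zeta i :: (B ++ .zeta j :: C)))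
      (code 1 (A ++ .tau i :: (B ++ .tau j :: C))) := by
    simp only [code_append, code, one_mul]
    refine WEq.append_left _ ?_
    rw [← h1]
    exact cancel_far _ _ h2
  have he : EqF (A ++ .zeta i :: (B ++ .zeta j :: C)) (A ++ .tau i :: (B ++ .tau j :: C)) :=
    eqv_of_code (b := True) (fun _ _ h => .strong h) (fun _ i => .zz i) hc
      (by simp [Letter.idx])
  have hl : (code 1 (A ++ .tau i :: (B ++ .tau j :: C))).length < m := by
    rw [← hw]; simp [code_append, code]
  obtain ⟨w0, k1, k2⟩ := IH _ hl _ rfl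
  exact ⟨w0, .trans _ _ _ he k1, k2⟩

end Words

/-- every element of `F_n` has an irreducible representative, and any
two irreducible braid words representing the same element are strongly equivalent. -/
theorem irreducible_representatives (n : ℕ) (w : List (Letter n)) :
    (∃ w0, EqF w w0 ∧ Irreducible w0) ∧
    ∀ w1 w2, EqF w w1 → EqF w w2 → Irreducible w1 → Irreducible w2 →
      StrongEq w1 w2 := by
  refine ⟨exists_irr _ w rfl, fun w1 w2 h1 h2 i1 i2 => ?_⟩
  obtain ⟨k1, k2⟩ := eqF_inv (Relation.EqvGen.trans _ _ _ (.symm _ _ h1) h2)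
  have := red_unique Disj.irr (fun _ _ h => h.symm) k1 (red_of_irreducible i1)
    (red_of_irreducible i2)
  exact eqv_of_code (b := False) (fun _ _ h => h) (fun h => h.elim) this k2

end OneTermBracket
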